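/- Effect soundness for CBPV: if ∅ ⊢ M :^φ F A (M is a closed well-typed computation of returner type), then ∅ ⊢ M ⇓ return W # φ' for some closed value W and some effect φ' with φ' ≤eff φ. -/

import Mathlib

set_option autoImplicit false

/-- A preordered monoid of effects `(E, ·, ⊥, ≤eff)`, with a distinguished `tock` effect. -/
structure EffSig (E : Type) where
  op : E → E → E
  bot : E
  tock : E
  le : E → E → Prop
  op_assoc : ∀ a b c, op (op a b) c = op a (op b c)
  bot_op : ∀ a, op bot a = a
  op_bot : ∀ a, op a bot = a
  le_refl : ∀ a, le a a
  le_trans : ∀ a b c, le a b → le b c → le a c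
  le_op : ∀ a b c d, le a b → le c d → le (op a c) (op b d)

namespace CBPVEff

mutual
/-- CBPV value types: `unit`, graded thunks `U_φ B`, positive products. -/
inductive VTy (E : Type) : Type where
  | unit : VTy E
  | thunk : E → CTy E → VTy E
  | prod : VTy E → VTy E → VTy E
/-- CBPV computation types: functions, returners `F A`, negative products. -/
inductive CTy (E : Type) : Type where
  | arr : VTy E → CTy E → CTy E
  | F : VTy E → CTy E
  | wth : CTy E → CTy E → CTy E
end

mutual
/-- CBPV values (de Bruijn indices for variables). -/
inductive Val : Type where
  | var : Nat → Val
  | unit : Val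
  | thunk : Comp → Val
  | pair : Val → Val → Val
/-- CBPV computations. -/
inductive Comp : Type where
  | lam : Comp → Comp
  | app : Comp → Val → Comp
  | force : Val → Comp
  | split : Val → Comp → Comp
  | cpair : Comp → Comp → Comp
  | fst : Comp → Comp
  | snd : Comp → Comp
  | ret : Val → Comp
  | letin : Comp → Comp → Comp
  | tick : Comp
end

mutual
/-- The value typing judgment `Γ ⊢ V : A` of the CBPV type-and-effect system. -/
inductive VHasTy {E : Type} (S : EffSig E) : List (VTy E) → Val → VTy E → Prop where
  | var : ∀ {Γ : List (VTy E)} {x : Nat} {A : VTy E},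
      Γ[x]? = some A → VHasTy S Γ (.var x) A
  | unit : ∀ {Γ : List (VTy E)}, VHasTy S Γ .unit .unit
  | thunk : ∀ {Γ : List (VTy E)} {M : Comp} {φ : E} {B : CTy E},
      CHasTy S Γ M φ B → VHasTy S Γ (.thunk M) (.thunk φ B)
  | pair : ∀ {Γ : List (VTy E)} {V₁ V₂ : Val} {A₁ A₂ : VTy E},
      VHasTy S Γ V₁ A₁ → VHasTy S Γ V₂ A₂ → VHasTy S Γ (.pair V₁ V₂) (.prod A₁ A₂)

/-- The computation typing judgment `Γ ⊢ M :^φ B` of the CBPV type-and-effect system. -/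
inductive CHasTy {E : Type} (S : EffSig E) : List (VTy E) → Comp → E → CTy E → Prop where
  | tick : ∀ {Γ : List (VTy E)} {φ : E}, S.le S.tock φ → CHasTy S Γ .tick φ (.F .unit)
  | lam : ∀ {Γ : List (VTy E)} {A : VTy E} {M : Comp} {φ : E} {B : CTy E},
      CHasTy S (A :: Γ) M φ B → CHasTy S Γ (.lam M) φ (.arr A B)
  | app : ∀ {Γ : List (VTy E)} {M : Comp} {V : Val} {A : VTy E} {φ : E} {B : CTy E},
      CHasTy S Γ M φ (.arr A B) → VHasTy S Γ V A → CHasTy S Γ (.app M V) φ B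
  | force : ∀ {Γ : List (VTy E)} {V : Val} {φ' φ : E} {B : CTy E},
      VHasTy S Γ V (.thunk φ' B) → S.le φ' φ → CHasTy S Γ (.force V) φ B
  | ret : ∀ {Γ : List (VTy E)} {V : Val} {A : VTy E} {φ : E},
      VHasTy S Γ V A → S.le S.bot φ → CHasTy S Γ (.ret V) φ (.F A)
  | letin : ∀ {Γ : List (VTy E)} {M N : Comp} {A : VTy E} {φ₁ φ₂ φ : E} {B : CTy E},
      CHasTy S Γ M φ₁ (.F A) → CHasTy S (A :: Γ) N φ₂ B →
      S.le (S.op φ₁ φ₂) φ → CHasTy S Γ (.letin M N) φ B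
  | split : ∀ {Γ : List (VTy E)} {V : Val} {A₁ A₂ : VTy E} {N : Comp} {φ : E} {B : CTy E},
      VHasTy S Γ V (.prod A₁ A₂) → CHasTy S (A₂ :: A₁ :: Γ) N φ B →
      CHasTy S Γ (.split V N) φ B
  | cpair : ∀ {Γ : List (VTy E)} {M₁ M₂ : Comp} {φ : E} {B₁ B₂ : CTy E},
      CHasTy S Γ M₁ φ B₁ → CHasTy S Γ M₂ φ B₂ → CHasTy S Γ (.cpair M₁ M₂) φ (.wth B₁ B₂)
  | fst : ∀ {Γ : List (VTy E)} {M : Comp} {φ : E} {B₁ B₂ : CTy E},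
      CHasTy S Γ M φ (.wth B₁ B₂) → CHasTy S Γ (.fst M) φ B₁
  | snd : ∀ {Γ : List (VTy E)} {M : Comp} {φ : E} {B₁ B₂ : CTy E},
      CHasTy S Γ M φ (.wth B₁ B₂) → CHasTy S Γ (.snd M) φ B₂
end

/-- Closed values: closures of thunks, unit, and pairs of closed values. -/
inductive CloVal : Type where
  | clo : List CloVal → Comp → CloVal
  | unit : CloVal
  | pair : CloVal → CloVal → CloVal

/-- Closed terminal computations. -/
inductive Terminal : Type where
  | ret : CloVal → Terminal
  | lamClo : List CloVal → Comp → Terminal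
  | cpairClo : List CloVal → Comp → Comp → Terminal

/-- The value judgment `ρ ⊢ V ⇓ W`: closing a value under an environment. -/
inductive EvalVal : List CloVal → Val → CloVal → Prop where
  | var : ∀ {ρ : List CloVal} {x : Nat} {W : CloVal},
      ρ[x]? = some W → EvalVal ρ (.var x) W
  | unit : ∀ {ρ : List CloVal}, EvalVal ρ .unit .unit
  | thunk : ∀ {ρ : List CloVal} {M : Comp}, EvalVal ρ (.thunk M) (.clo ρ M)
  | pair : ∀ {ρ : List CloVal} {V₁ V₂ : Val} {W₁ W₂ : CloVal},
      EvalVal ρ V₁ W₁ → EvalVal ρ V₂ W₂ → EvalVal ρ (.pair V₁ V₂) (.pair W₁ W₂)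

/-- The effect-instrumented big-step judgment `ρ ⊢ M ⇓ T # φ`. -/
inductive EvalComp {E : Type} (S : EffSig E) : List CloVal → Comp → Terminal → E → Prop where
  | tick : ∀ {ρ : List CloVal}, EvalComp S ρ .tick (.ret .unit) S.tock
  | ret : ∀ {ρ : List CloVal} {V : Val} {W : CloVal},
      EvalVal ρ V W → EvalComp S ρ (.ret V) (.ret W) S.bot
  | lam : ∀ {ρ : List CloVal} {M : Comp}, EvalComp S ρ (.lam M) (.lamClo ρ M) S.bot
  | cpair : ∀ {ρ : List CloVal} {M₁ M₂ : Comp},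
      EvalComp S ρ (.cpair M₁ M₂) (.cpairClo ρ M₁ M₂) S.bot
  | app : ∀ {ρ ρ' : List CloVal} {M M' : Comp} {V : Val} {W : CloVal} {T : Terminal} {φ₁ φ₂ : E},
      EvalComp S ρ M (.lamClo ρ' M') φ₁ → EvalVal ρ V W →
      EvalComp S (W :: ρ') M' T φ₂ → EvalComp S ρ (.app M V) T (S.op φ₁ φ₂)
  | force : ∀ {ρ ρ' : List CloVal} {V : Val} {M : Comp} {T : Terminal} {φ : E},
      EvalVal ρ V (.clo ρ' M) → EvalComp S ρ' M T φ → EvalComp S ρ (.force V) T φ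
  | letin : ∀ {ρ : List CloVal} {M N : Comp} {W : CloVal} {T : Terminal} {φ₁ φ₂ : E},
      EvalComp S ρ M (.ret W) φ₁ → EvalComp S (W :: ρ) N T φ₂ →
      EvalComp S ρ (.letin M N) T (S.op φ₁ φ₂)
  | split : ∀ {ρ : List CloVal} {V : Val} {W₁ W₂ : CloVal} {N : Comp} {T : Terminal} {φ : E},
      EvalVal ρ V (.pair W₁ W₂) → EvalComp S (W₂ :: W₁ :: ρ) N T φ →
      EvalComp S ρ (.split V N) T φ
  | fst : ∀ {ρ ρ' : List CloVal} {M M₁ M₂ : Comp} {T : Terminal} {φ₁ φ₂ : E},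
      EvalComp S ρ M (.cpairClo ρ' M₁ M₂) φ₁ → EvalComp S ρ' M₁ T φ₂ →
      EvalComp S ρ (.fst M) T (S.op φ₁ φ₂)
  | snd : ∀ {ρ ρ' : List CloVal} {M M₁ M₂ : Comp} {T : Terminal} {φ₁ φ₂ : E},
      EvalComp S ρ M (.cpairClo ρ' M₁ M₂) φ₁ → EvalComp S ρ' M₂ T φ₂ →
      EvalComp S ρ (.snd M) T (S.op φ₁ φ₂)

mutual
/-- Logical relation on closed values. -/
def VRel {E : Type} (S : EffSig E) : VTy E → CloVal → Prop
  | .unit, W => W = .unit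
  | .thunk φ B, W => ∃ ρ M, W = .clo ρ M ∧
      ∃ T e r, EvalComp S ρ M T e ∧ TRel S B T r ∧ S.le (S.op e r) φ
  | .prod A₁ A₂, W => ∃ W₁ W₂, W = .pair W₁ W₂ ∧ VRel S A₁ W₁ ∧ VRel S A₂ W₂
/-- Logical relation on terminals, with a bound on the residual effect. -/
def TRel {E : Type} (S : EffSig E) : CTy E → Terminal → E → Prop
  | .F A, T, φ => ∃ W, T = .ret W ∧ VRel S A W ∧ S.le S.bot φ
  | .arr A B, T, φ => ∃ ρ M, T = .lamClo ρ M ∧ ∀ W, VRel S A W →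
      ∃ T' e r, EvalComp S (W :: ρ) M T' e ∧ TRel S B T' r ∧ S.le (S.op e r) φ
  | .wth B₁ B₂, T, φ => ∃ ρ M₁ M₂, T = .cpairClo ρ M₁ M₂ ∧
      (∃ T' e r, EvalComp S ρ M₁ T' e ∧ TRel S B₁ T' r ∧ S.le (S.op e r) φ) ∧
      (∃ T' e r, EvalComp S ρ M₂ T' e ∧ TRel S B₂ T' r ∧ S.le (S.op e r) φ)
end

/-- Environments related to a typing context. -/
def GRel {E : Type} (S : EffSig E) (Γ : List (VTy E)) (ρ : List CloVal) : Prop :=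
  ∀ (x : Nat) (A : VTy E), Γ[x]? = some A → ∃ W, ρ[x]? = some W ∧ VRel S A W

theorem GRel.cons {E : Type} {S : EffSig E} {Γ : List (VTy E)} {ρ : List CloVal}
    {A : VTy E} {W : CloVal} (hW : VRel S A W) (h : GRel S Γ ρ) :
    GRel S (A :: Γ) (W :: ρ) := by
  intro x A' hx
  cases x with
  | zero =>
    simp only [List.getElem?_cons_zero, Option.some.injEq] at hx
    subst hx
    exact ⟨W, by simp, hW⟩
  | succ n =>
    simp only [List.getElem?_cons_succ] at hx ⊢
    exact h n A' hx

/-- Combining the effect of a first evaluation with that of the continuation. -/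
theorem le_comb {E : Type} (S : EffSig E) {e₁ r₁ e₂ r₂ φ : E}
    (h₁ : S.le (S.op e₁ r₁) φ) (h₂ : S.le (S.op e₂ r₂) r₁) :
    S.le (S.op (S.op e₁ e₂) r₂) φ := by
  rw [S.op_assoc]
  exact S.le_trans _ _ _ (S.le_op _ _ _ _ (S.le_refl _) h₂) h₁

mutual
theorem fundV {E : Type} {S : EffSig E} {Γ : List (VTy E)} {V : Val} {A : VTy E}
    (h : VHasTy S Γ V A) (ρ : List CloVal) (hρ : GRel S Γ ρ) :
    ∃ W, EvalVal ρ V W ∧ VRel S A W := by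
  cases h with
  | var hx =>
    obtain ⟨W, h1, h2⟩ := hρ _ _ hx
    exact ⟨W, .var h1, h2⟩
  | unit => exact ⟨_, .unit, by simp [VRel]⟩
  | thunk hM =>
    refine ⟨_, .thunk, ?_⟩
    rw [VRel]
    exact ⟨_, _, rfl, fundC hM ρ hρ⟩
  | pair h1 h2 =>
    obtain ⟨W₁, a1, b1⟩ := fundV h1 ρ hρ
    obtain ⟨W₂, a2, b2⟩ := fundV h2 ρ hρ
    refine ⟨_, .pair a1 a2, ?_⟩
    rw [VRel]
    exact ⟨_, _, rfl, b1, b2⟩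
theorem fundC {E : Type} {S : EffSig E} {Γ : List (VTy E)} {M : Comp} {φ : E} {B : CTy E}
    (h : CHasTy S Γ M φ B) (ρ : List CloVal) (hρ : GRel S Γ ρ) :
    ∃ T e r, EvalComp S ρ M T e ∧ TRel S B T r ∧ S.le (S.op e r) φ := by
  cases h with
  | tick hle =>
    refine ⟨_, _, S.bot, .tick, ?_, by rwa [S.op_bot]⟩
    rw [TRel]
    exact ⟨_, rfl, by simp [VRel], S.le_refl _⟩
  | lam hM =>
    refine ⟨_, _, φ, .lam, ?_, by rw [S.bot_op]; exact S.le_refl _⟩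
    rw [TRel]
    exact ⟨_, _, rfl, fun W hW => fundC hM (W :: ρ) (hρ.cons hW)⟩
  | app hM hV =>
    obtain ⟨T, e, r, h1, h2, h3⟩ := fundC hM ρ hρ
    obtain ⟨W, h4, h5⟩ := fundV hV ρ hρ
    rw [TRel] at h2
    obtain ⟨ρ', M', rfl, h6⟩ := h2
    obtain ⟨T', e', r', h7, h8, h9⟩ := h6 W h5
    exact ⟨T', _, r', .app h1 h4 h7, h8, le_comb S h3 h9⟩
  | force hV hle =>
    obtain ⟨W, h4, h5⟩ := fundV hV ρ hρ
    rw [VRel] at h5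
    obtain ⟨ρ', M', rfl, T', e', r', h7, h8, h9⟩ := h5
    exact ⟨T', _, r', .force h4 h7, h8, S.le_trans _ _ _ h9 hle⟩
  | ret hV hle =>
    obtain ⟨W, h4, h5⟩ := fundV hV ρ hρ
    refine ⟨_, _, S.bot, .ret h4, ?_, by rwa [S.op_bot]⟩
    rw [TRel]
    exact ⟨_, rfl, h5, S.le_refl _⟩
  | letin hM hN hle =>
    obtain ⟨T, e, r, h1, h2, h3⟩ := fundC hM ρ hρ
    rw [TRel] at h2
    obtain ⟨W, rfl, hW, hr⟩ := h2
    obtain ⟨T', e', r', h7, h8, h9⟩ := fundC hN (W :: ρ) (hρ.cons hW)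
    refine ⟨T', _, r', .letin h1 h7, h8, ?_⟩
    have he := S.le_trans _ _ _ (S.le_op _ _ _ _ (S.le_refl e) hr) h3
    rw [S.op_bot] at he
    rw [S.op_assoc]
    exact S.le_trans _ _ _ (S.le_op _ _ _ _ he h9) hle
  | split hV hN =>
    obtain ⟨W, h4, h5⟩ := fundV hV ρ hρ
    rw [VRel] at h5
    obtain ⟨W₁, W₂, rfl, hW₁, hW₂⟩ := h5
    obtain ⟨T', e', r', h7, h8, h9⟩ := fundC hN (W₂ :: W₁ :: ρ) ((hρ.cons hW₁).cons hW₂)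
    exact ⟨T', _, r', .split h4 h7, h8, h9⟩
  | cpair hM hN =>
    refine ⟨_, _, φ, .cpair, ?_, by rw [S.bot_op]; exact S.le_refl _⟩
    rw [TRel]
    exact ⟨_, _, _, rfl, fundC hM ρ hρ, fundC hN ρ hρ⟩
  | fst hM =>
    obtain ⟨T, e, r, h1, h2, h3⟩ := fundC hM ρ hρ
    rw [TRel] at h2
    obtain ⟨ρ', M₁, M₂, rfl, ⟨T', e', r', h7, h8, h9⟩, _⟩ := h2
    exact ⟨T', _, r', .fst h1 h7, h8, le_comb S h3 h9⟩
  | snd hM =>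
    obtain ⟨T, e, r, h1, h2, h3⟩ := fundC hM ρ hρ
    rw [TRel] at h2
    obtain ⟨ρ', M₁, M₂, rfl, _, ⟨T', e', r', h7, h8, h9⟩⟩ := h2
    exact ⟨T', _, r', .snd h1 h7, h8, le_comb S h3 h9⟩
end

/-- Effect soundness for CBPV: a closed well-typed computation of returner type
evaluates to a returned closed value with an effect bounded by the static effect. -/
theorem effect_soundness {E : Type} (S : EffSig E) {M : Comp} {φ : E} {A : VTy E}
    (h : CHasTy S [] M φ (.F A)) :
    ∃ (W : CloVal) (φ' : E), EvalComp S [] M (.ret W) φ' ∧ S.le φ' φ := by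
  obtain ⟨T, e, r, h1, h2, h3⟩ := fundC h [] (by intro x A hx; simp at hx)
  rw [TRel] at h2
  obtain ⟨W, rfl, _, hr⟩ := h2
  refine ⟨W, e, h1, ?_⟩
  have he := S.le_trans _ _ _ (S.le_op _ _ _ _ (S.le_refl e) hr) h3
  rwa [S.op_bot] at he

end CBPVEff
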